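/- Let T be a uniquely ergodic homeomorphism of a compact metric space X with unique invariant measure μ, and let f : X → C be a bounded measurable function such that the closure of its set of discontinuity points has μ-measure zero. Then for every x ∈ X, (1/N) ∑_{n≤N} f(T^n x) converges to ∫_X f dμ as N → ∞. -/

import Mathlib

/-!
The empirical measures of long orbit segments are almost invariant, uniformly in the starting
point, so each of their weak limits is an invariant probability measure. Probability measures on a
compact space form a compact space, hence unique ergodicity forces the empirical measures to
converge weakly to `μ`, uniformly in the starting point. By the portmanteau theorem, weak
convergence passes to the push-forwards under a `μ`-a.e. continuous function, because the preimage
of an open set then differs from its interior by a null set.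
-/

open MeasureTheory Filter

open scoped BoundedContinuousFunction NNReal Topology

section WeakConvergence

variable {X ι : Type*} [TopologicalSpace X] [MeasurableSpace X]

theorem aemeasurable_of_ae_continuousAt [OpensMeasurableSpace X] {Y : Type*} [PseudoEMetricSpace Y]
    [MeasurableSpace Y] [BorelSpace Y] {μ : Measure X} {f : X → Y}
    (hf : ∀ᵐ x ∂μ, ContinuousAt f x) : AEMeasurable f μ := by
  have hrestrict : μ.restrict {x | ContinuousAt f x} = μ := Measure.restrict_eq_self_of_ae_mem hf
  have hon : ContinuousOn f {x | ContinuousAt f x} := fun x hx ↦ hx.continuousWithinAt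
  exact hrestrict ▸ hon.aemeasurable (measurableSet_of_continuousAt f)

theorem measure_interior_preimage_of_ae_continuousAt {Y : Type*} [TopologicalSpace Y]
    {μ : Measure X} {f : X → Y} (hf : ∀ᵐ x ∂μ, ContinuousAt f x) {G : Set Y} (hG : IsOpen G) :
    μ (interior (f ⁻¹' G)) = μ (f ⁻¹' G) := by
  refine measure_congr (interior_subset.eventuallyLE.antisymm ?_)
  filter_upwards [hf] with x hx hxG
  exact mem_interior_iff_mem_nhds.2 (hx (hG.mem_nhds hxG))

variable [OpensMeasurableSpace X] [HasOuterApproxClosed X] {L : Filter ι} [L.IsCountablyGenerated]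
  {νs : ι → ProbabilityMeasure X} {ν : ProbabilityMeasure X}

theorem tendsto_map_of_ae_continuousAt {Y : Type*} [TopologicalSpace Y] [MeasurableSpace Y]
    [BorelSpace Y] (hν : Tendsto νs L (𝓝 ν)) {f : X → Y}
    (hfs : ∀ i, AEMeasurable f (νs i)) (hf : AEMeasurable f ν)
    (hcont : ∀ᵐ x ∂(ν : Measure X), ContinuousAt f x) :
    Tendsto (fun i ↦ (νs i).map (hfs i)) L (𝓝 (ν.map hf)) := by
  refine tendsto_of_forall_isOpen_le_liminf' fun G hG ↦ ?_
  simp only [ProbabilityMeasure.map_apply' _ _ hG.measurableSet]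
  calc (ν : Measure X) (f ⁻¹' G)
      = (ν : Measure X) (interior (f ⁻¹' G)) :=
        (measure_interior_preimage_of_ae_continuousAt hcont hG).symm
    _ ≤ L.liminf fun i ↦ (νs i : Measure X) (interior (f ⁻¹' G)) :=
        ProbabilityMeasure.le_liminf_measure_open_of_tendsto hν isOpen_interior
    _ ≤ L.liminf fun i ↦ (νs i : Measure X) (f ⁻¹' G) :=
        liminf_le_liminf (.of_forall fun _ ↦ measure_mono interior_subset)

theorem tendsto_integral_of_ae_continuousAt {𝕜 : Type*} [RCLike 𝕜] (hν : Tendsto νs L (𝓝 ν))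
    {f : X → 𝕜} (hfs : ∀ i, AEMeasurable f (νs i)) {C : ℝ} (hC : ∀ x, ‖f x‖ ≤ C)
    (hcont : ∀ᵐ x ∂(ν : Measure X), ContinuousAt f x) :
    Tendsto (fun i ↦ ∫ x, f x ∂(νs i : Measure X)) L (𝓝 (∫ x, f x ∂(ν : Measure X))) := by
  -- Corestricting `f` to a ball makes the inclusion of its codomain a bounded test function.
  let F : X → Metric.closedBall (0 : 𝕜) C := fun x ↦ ⟨f x, mem_closedBall_zero_iff.2 (hC x)⟩
  let incl : Metric.closedBall (0 : 𝕜) C →ᵇ 𝕜 := .mkOfCompact ⟨Subtype.val, continuous_subtype_val⟩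
  have hFs : ∀ i, AEMeasurable F (νs i) := fun i ↦ (hfs i).subtype_mk
  have hF : AEMeasurable F ν := (aemeasurable_of_ae_continuousAt hcont).subtype_mk
  have hFcont : ∀ᵐ x ∂(ν : Measure X), ContinuousAt F x :=
    hcont.mono fun _ hx ↦ hx.codRestrict _
  have hintegral (ρ : ProbabilityMeasure X) (hρ : AEMeasurable F ρ) :
      ∫ y, incl y ∂(ρ.map hρ : Measure _) = ∫ x, f x ∂(ρ : Measure X) := by
    rw [ProbabilityMeasure.toMeasure_map, integral_map hρ incl.continuous.aestronglyMeasurable]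
    rfl
  simpa only [hintegral] using (ProbabilityMeasure.tendsto_iff_forall_integral_rclike_tendsto 𝕜).1
    (tendsto_map_of_ae_continuousAt hν hFs hF hFcont) incl

end WeakConvergence

theorem birkhoffAverage_comp_self (R : Type*) {X M : Type*} [DivisionSemiring R]
    [AddCommMonoid M] [Module R M] (T : X → X) (g : X → M) (N : ℕ) (x : X) :
    birkhoffAverage R T (g ∘ T) N x = birkhoffAverage R T g N (T x) := by
  simp only [birkhoffAverage, birkhoffSum, Function.comp_apply, ← Function.iterate_succ_apply',
    ← Function.iterate_succ_apply]

theorem tendstoUniformly_birkhoffAverage_apply_sub_birkhoffAverage (𝕜 : Type*) {X E : Type*}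
    [RCLike 𝕜] [NormedAddCommGroup E] [NormedSpace 𝕜 E] {g : X → E}
    (hg : Bornology.IsBounded (Set.range g)) (T : X → X) :
    TendstoUniformly (fun N x ↦ birkhoffAverage 𝕜 T g N (T x) - birkhoffAverage 𝕜 T g N x)
      (fun _ ↦ 0) atTop := by
  obtain ⟨C, hC⟩ := Metric.isBounded_range_iff.1 hg
  have hlim : Tendsto (fun N : ℕ ↦ C / N) atTop (𝓝 0) :=
    tendsto_const_nhds.div_atTop tendsto_natCast_atTop_atTop
  refine Metric.tendstoUniformly_iff.2 fun ε hε ↦ ?_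
  filter_upwards [hlim.eventually_lt_const hε] with N hN x
  rw [dist_comm, dist_zero_right, ← dist_eq_norm, dist_birkhoffAverage_apply_birkhoffAverage]
  exact (div_le_div_of_nonneg_right (hC _ _) N.cast_nonneg).trans_lt hN

section EmpiricalMeasure

variable {X : Type*} [MeasurableSpace X]

theorem isProbabilityMeasure_birkhoffAverage_dirac (T : X → X) {N : ℕ} (hN : N ≠ 0) (x : X) :
    IsProbabilityMeasure (birkhoffAverage ℝ≥0 T Measure.dirac N x) where
  measure_univ := by
    simp [birkhoffAverage, birkhoffSum, ENNReal.smul_def, ENNReal.coe_inv, hN,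
      ENNReal.inv_mul_cancel]

/-- The empirical measure of the orbit segment `x, T x, …, T^N x`: the uniform average of the Dirac
masses at its points. The segment has `N + 1` points, so that it is never empty and the average is
always a probability measure. -/
noncomputable def empiricalMeasure (T : X → X) (N : ℕ) (x : X) : ProbabilityMeasure X :=
  ⟨birkhoffAverage ℝ≥0 T Measure.dirac (N + 1) x,
    isProbabilityMeasure_birkhoffAverage_dirac T N.succ_ne_zero x⟩

variable [MeasurableSingletonClass X]

theorem aemeasurable_empiricalMeasure {Y : Type*} [MeasurableSpace Y] (f : X → Y) (T : X → X)
    (N : ℕ) (x : X) : AEMeasurable f (empiricalMeasure T N x) := by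
  have hsum : AEMeasurable f (∑ k ∈ Finset.range (N + 1), Measure.dirac (T^[k] x)) :=
    Finset.sum_induction _ (fun μ ↦ AEMeasurable f μ) (fun _ _ ↦ AEMeasurable.add_measure)
      aemeasurable_zero_measure fun _ _ ↦ aemeasurable_dirac
  exact hsum.smul_measure (((N + 1 : ℕ) : ℝ≥0)⁻¹)

theorem integral_empiricalMeasure {E : Type*} [NormedAddCommGroup E] [NormedSpace ℝ E]
    [CompleteSpace E] (f : X → E) (T : X → X) (N : ℕ) (x : X) :
    ∫ y, f y ∂(empiricalMeasure T N x : Measure X) = birkhoffAverage ℝ T f (N + 1) x := by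
  have hdirac (a : X) : Integrable f (Measure.dirac a) := integrable_dirac enorm_lt_top
  simp only [empiricalMeasure, ProbabilityMeasure.coe_mk, birkhoffAverage, birkhoffSum]
  rw [integral_smul_nnreal_measure, integral_finsetSum_measure fun k _ ↦ hdirac _]
  simp [NNReal.smul_def]

variable [TopologicalSpace X] [BorelSpace X] [HasOuterApproxClosed X]

theorem map_eq_self_of_tendsto_empiricalMeasure {T : X → X} (hT : Continuous T) {ι : Type*}
    {L : Filter ι} [L.NeBot] {N : ι → ℕ} (hN : Tendsto N L atTop) {x : ι → X}
    {ν : ProbabilityMeasure X} (hν : Tendsto (fun i ↦ empiricalMeasure T (N i) (x i)) L (𝓝 ν)) :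
    (ν : Measure X).map T = ν := by
  have : IsProbabilityMeasure ((ν : Measure X).map T) :=
    Measure.isProbabilityMeasure_map hT.aemeasurable
  refine ext_of_forall_integral_eq_of_IsFiniteMeasure fun g ↦ ?_
  rw [integral_map hT.aemeasurable g.continuous.aestronglyMeasurable]
  have hlim := ProbabilityMeasure.tendsto_iff_forall_integral_tendsto.1 hν
  have hdiff : Tendsto (fun i ↦ ∫ y, g (T y) ∂(empiricalMeasure T (N i) (x i) : Measure X) -
      ∫ y, g y ∂(empiricalMeasure T (N i) (x i) : Measure X)) L (𝓝 0) := by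
    have hunif := tendsto_prod_top_iff.2
      (tendstoUniformly_birkhoffAverage_apply_sub_birkhoffAverage ℝ g.isBounded_range T)
    refine (hunif.comp (((tendsto_add_atTop_nat 1).comp hN).prodMk (tendsto_top (f := x)))).congr
      fun i ↦ ?_
    rw [integral_empiricalMeasure, integral_empiricalMeasure]
    exact congrArg (· - _) (birkhoffAverage_comp_self ℝ T g _ _).symm
  exact sub_eq_zero.1 (tendsto_nhds_unique
    ((hlim (g.compContinuous ⟨T, hT⟩)).sub (hlim g)) hdiff)

end EmpiricalMeasure

section UniquelyErgodic

variable {X : Type*} [TopologicalSpace X] [T2Space X] [CompactSpace X] [HasOuterApproxClosed X]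
  [MeasurableSpace X] [BorelSpace X] {T : X → X}

/-- The filter `atTop ×ˢ ⊤` encodes uniformity in the starting point: `ProbabilityMeasure X` carries
no uniform structure, so `TendstoUniformly` is not available. -/
theorem tendsto_empiricalMeasure_of_unique_invariant (hT : Continuous T) {μ : ProbabilityMeasure X}
    (hμ : ∀ ν : ProbabilityMeasure X, (ν : Measure X).map T = ν → ν = μ) :
    Tendsto ↿(empiricalMeasure T) (atTop ×ˢ ⊤) (𝓝 μ) := by
  refine tendsto_nhds_of_unique_mapClusterPt fun ν hν ↦ hμ ν ?_
  obtain ⟨U, hU, hlim⟩ := mapClusterPt_iff_ultrafilter.1 hν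
  exact map_eq_self_of_tendsto_empiricalMeasure hT (tendsto_fst.mono_left hU) hlim

theorem birkhoff_average_tendsto_of_ae_continuous_general (hT : Continuous T) {μ : Measure X}
    [IsProbabilityMeasure μ]
    (hue : ∀ ν : Measure X, IsProbabilityMeasure ν → ν.map T = ν → ν = μ)
    {𝕜 : Type*} [RCLike 𝕜] {f : X → 𝕜} (hbd : ∃ C : ℝ, ∀ x, ‖f x‖ ≤ C)
    (hcont : ∀ᵐ x ∂μ, ContinuousAt f x) :
    TendstoUniformly (birkhoffAverage 𝕜 T f) (fun _ ↦ ∫ y, f y ∂μ) atTop := by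
  obtain ⟨C, hC⟩ := hbd
  have hweak : Tendsto ↿(empiricalMeasure T) (atTop ×ˢ ⊤) (𝓝 (⟨μ, ‹_›⟩ : ProbabilityMeasure X)) :=
    tendsto_empiricalMeasure_of_unique_invariant hT fun ν hν ↦ Subtype.ext (hue ν ν.2 hν)
  have hintegral := tendsto_integral_of_ae_continuousAt hweak
    (fun p ↦ aemeasurable_empiricalMeasure f T p.1 p.2) hC hcont
  have hshift : TendstoUniformly (fun N ↦ birkhoffAverage ℝ T f (N + 1))
      (fun _ ↦ ∫ y, f y ∂μ) atTop :=
    tendsto_prod_top_iff.1 (hintegral.congr fun p ↦ integral_empiricalMeasure f T p.1 p.2)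
  rw [birkhoffAverage_congr_ring' 𝕜 ℝ, ← map_add_atTop_eq_nat 1]
  exact hshift

end UniquelyErgodic

/-- For a uniquely ergodic homeomorphism `T` of a compact metric space, the Birkhoff
averages of any bounded measurable function whose set of discontinuity points has closure
of measure zero converge at every point to the space average. -/
theorem birkhoff_average_tendsto_of_ae_continuous
    {X : Type*} [MetricSpace X] [CompactSpace X] [MeasurableSpace X] [BorelSpace X]
    (T : X ≃ₜ X) (μ : Measure X) [IsProbabilityMeasure μ]
    (hT : MeasurePreserving T μ μ)
    (hue : ∀ ν : Measure X, IsProbabilityMeasure ν → Measure.map T ν = ν → ν = μ)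
    (f : X → ℂ) (hmeas : Measurable f) (hbd : ∃ C : ℝ, ∀ x, ‖f x‖ ≤ C)
    (hdisc : μ (closure {x : X | ¬ ContinuousAt f x}) = 0) :
    ∀ x : X,
      Tendsto (fun N : ℕ => (N : ℂ)⁻¹ • ∑ n ∈ Finset.range N, f ((⇑T)^[n] x))
        atTop (nhds (∫ y, f y ∂μ)) :=
  (birkhoff_average_tendsto_of_ae_continuous_general T.continuous hue hbd
    (measure_mono_null subset_closure hdisc)).tendsto_at
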